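/- Consider cliques in Γ_1, i.e. sets of roots whose pairwise dot products all equal 1. (i) Every maximal clique in Γ_1 has size 7 or 8. (ii) The cliques of size 7 in Γ_1 form exactly two orbits under the Weyl group W: the non-maximal ones, of which there are 138240, and the maximal ones, of which there are 69120; a clique of size 7 in Γ_1 is maximal if and only if the sum of its elements lies in 2Λ. (iii) There are exactly 17280 cliques of size 8 in Γ_1. -/

import Mathlib

noncomputable section

/-- The standard dot product on ℝ^8. -/
def dot (a b : Fin 8 → ℝ) : ℝ := ∑ i, a i * b i

/-- Membership in the E8 lattice Λ: all coordinates are integers or all lie in ℤ + 1/2,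
and the coordinates sum to an even integer. -/
def inLambda (a : Fin 8 → ℝ) : Prop :=
  ((∀ i, ∃ n : ℤ, a i = n) ∨ (∀ i, ∃ n : ℤ, a i = n + 1 / 2)) ∧
    ∃ n : ℤ, (∑ i, a i) = 2 * n

/-- The E8 root system E: lattice vectors of squared norm 2. -/
def isRoot (a : Fin 8 → ℝ) : Prop := inLambda a ∧ dot a a = 2

/-- The Weyl group W: linear isometries of ℝ^8 mapping the root system E onto itself. -/
def IsWeyl (w : (Fin 8 → ℝ) ≃ₗ[ℝ] (Fin 8 → ℝ)) : Prop :=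
  (∀ a b : Fin 8 → ℝ, dot (w a) (w b) = dot a b) ∧
    (⇑w '' {a | isRoot a} = {a | isRoot a})

/-- A clique in the colored graph `Γ_c`: a set of roots whose pairwise dot products
lie in the color set `c`. -/
def IsClique (c : Set ℝ) (K : Finset (Fin 8 → ℝ)) : Prop :=
  (∀ e ∈ K, isRoot e) ∧ ∀ e ∈ K, ∀ f ∈ K, e ≠ f → dot e f ∈ c

/-- A maximal clique in `Γ_c`: a clique not properly contained in another clique. -/
def IsMaxClique (c : Set ℝ) (K : Finset (Fin 8 → ℝ)) : Prop :=
  IsClique c K ∧ ∀ K' : Finset (Fin 8 → ℝ), IsClique c K' → K ⊆ K' → K' = K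

/-!
The group `W` acts transitively on the cliques of size `k` in `Γ_1` for `k ≤ 6`, by induction on
`k`: two adjacent common neighbors `x`, `y` of a clique `K` are exchanged by the reflection in the
root `x - y`, which fixes `K` pointwise, and for `k < 6` the common neighbors of the clique `{e₀ +
e₁, …, e₀ + e_k}` form a connected graph. For `k = 6` there are three common neighbors, `e₀ - e₇`,
`e₀ + e₇` and `(1/2, …, 1/2)`, and only the last two are adjacent. Adding `e₀ - e₇` gives a
maximal clique, and adding either of the other two gives a clique with exactly one further
extension, so there are two orbits on the cliques of size `7` and no clique has size `9`. The
numbers of cliques follow by counting the pairs `K ⊂ insert x K` in two ways, and the maximal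
cliques of size `7` are detected by half the sum of their elements, because `W` preserves `Λ`.
-/

section

open Finset MulAction
open scoped Pointwise

theorem dot_comm (a b : Fin 8 → ℝ) : dot a b = dot b a := dotProduct_comm a b

theorem dot_add (a b c : Fin 8 → ℝ) : dot a (b + c) = dot a b + dot a c := dotProduct_add a b c

theorem dot_sub (a b c : Fin 8 → ℝ) : dot a (b - c) = dot a b - dot a c := dotProduct_sub a b c

theorem dot_neg (a b : Fin 8 → ℝ) : dot a (-b) = -dot a b := dotProduct_neg a b

theorem dot_smul (a : Fin 8 → ℝ) (t : ℝ) (b : Fin 8 → ℝ) : dot a (t • b) = t * dot a b :=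
  dotProduct_smul t a b

/-! ### Doubled coordinates -/

/-- The passage from doubled coordinates to actual ones. Every vector of `Λ` has integral doubled
coordinates, which is what makes the finite verifications below computations in `ℤ`. -/
def halve : (Fin 8 → ℤ) →+ (Fin 8 → ℝ) where
  toFun v i := v i / 2
  map_zero' := by ext; simp
  map_add' u v := by ext; simp [add_div]

theorem halve_apply (v : Fin 8 → ℤ) (i : Fin 8) : halve v i = v i / 2 := rfl

theorem halve_injective : Function.Injective halve := fun u v h => by
  ext i
  have hi := congrFun h i
  simp only [halve_apply] at hi
  exact_mod_cast (div_left_inj' two_ne_zero).mp hi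

theorem dot_halve (u v : Fin 8 → ℤ) : dot (halve u) (halve v) = (u ⬝ᵥ v : ℤ) / 4 := by
  simp only [dot, dotProduct, halve_apply, Int.cast_sum, Int.cast_mul, sum_div]
  exact sum_congr rfl fun i _ => by ring

theorem sum_halve (v : Fin 8 → ℤ) : ∑ i, halve v i = (∑ i, v i : ℤ) / 2 := by
  simp only [halve_apply, Int.cast_sum, sum_div]

theorem div_two_eq_intCast_iff (m n : ℤ) : (m : ℝ) / 2 = n ↔ m = 2 * n := by
  rw [div_eq_iff two_ne_zero, mul_comm]
  norm_cast

theorem div_two_eq_intCast_add_half_iff (m n : ℤ) : (m : ℝ) / 2 = n + 1 / 2 ↔ m = 2 * n + 1 := by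
  rw [← @Int.cast_inj ℝ]
  push_cast
  constructor <;> intro h <;> linarith

theorem inLambda_halve {v : Fin 8 → ℤ} :
    inLambda (halve v) ↔ (∀ i, 2 ∣ v i - v 0) ∧ 4 ∣ ∑ i, v i := by
  have parity : ((∀ i, ∃ n : ℤ, v i = 2 * n) ∨ ∀ i, ∃ n : ℤ, v i = 2 * n + 1) ↔
      ∀ i, 2 ∣ v i - v 0 := by
    constructor
    · rintro (h | h) i <;> obtain ⟨m, hm⟩ := h i <;> obtain ⟨n, hn⟩ := h 0 <;> omega
    · intro h
      rcases Int.even_or_odd' (v 0) with ⟨n, hn | hn⟩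
      · exact .inl fun i => by obtain ⟨m, hm⟩ := h i; exact ⟨m + n, by omega⟩
      · exact .inr fun i => by obtain ⟨m, hm⟩ := h i; exact ⟨m + n, by omega⟩
  have sum_even : (∃ n : ℤ, ((∑ i, v i : ℤ) : ℝ) / 2 = 2 * n) ↔ 4 ∣ ∑ i, v i := by
    refine exists_congr fun n => ?_
    have := div_two_eq_intCast_iff (∑ i, v i) (2 * n)
    push_cast at this ⊢
    rw [this]
    omega
  rw [inLambda, sum_halve, sum_even]
  simp only [halve_apply, div_two_eq_intCast_iff, div_two_eq_intCast_add_half_iff, parity]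

theorem isRoot_halve {v : Fin 8 → ℤ} :
    isRoot (halve v) ↔ ((∀ i, 2 ∣ v i - v 0) ∧ 4 ∣ ∑ i, v i) ∧ v ⬝ᵥ v = 8 := by
  rw [isRoot, inLambda_halve, dot_halve, div_eq_iff four_ne_zero,
    show (2 * 4 : ℝ) = (8 : ℤ) by norm_num, Int.cast_inj]

theorem exists_halve_eq_of_inLambda {a : Fin 8 → ℝ} (ha : inLambda a) : ∃ v, halve v = a := by
  rcases ha.1 with h | h <;> choose m hm using h
  · exact ⟨fun i => 2 * m i, funext fun i => by simp [halve_apply, hm]⟩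
  · exact ⟨fun i => 2 * m i + 1, funext fun i => by simp [halve_apply, hm, add_div]⟩

theorem four_dvd_dotProduct {u v : Fin 8 → ℤ} (hu : inLambda (halve u))
    (hv : inLambda (halve v)) : 4 ∣ u ⬝ᵥ v := by
  rw [inLambda_halve] at hu hv
  have expand : u ⬝ᵥ v = u 0 * ∑ i, v i + v 0 * (∑ i, u i - 8 * u 0) +
      ∑ i, (u i - u 0) * (v i - v 0) := by
    simp only [dotProduct, Fin.sum_univ_eight]
    ring
  rw [expand]
  refine dvd_add (dvd_add (dvd_mul_of_dvd_right hv.2 _) (dvd_mul_of_dvd_right ?_ _)) ?_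
  · exact dvd_sub hu.2 (dvd_mul_of_dvd_left (by norm_num) _)
  · exact dvd_sum fun i _ => mul_dvd_mul (hu.1 i) (hv.1 i)

theorem exists_int_dot_eq {a b : Fin 8 → ℝ} (ha : inLambda a) (hb : inLambda b) :
    ∃ n : ℤ, dot a b = n := by
  obtain ⟨u, rfl⟩ := exists_halve_eq_of_inLambda ha
  obtain ⟨v, rfl⟩ := exists_halve_eq_of_inLambda hb
  obtain ⟨n, hn⟩ := four_dvd_dotProduct ha hb
  exact ⟨n, by rw [dot_halve, hn]; push_cast; ring⟩

theorem isRoot_halve_single_add_single {i j : Fin 8} (hij : i ≠ j) :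
    isRoot (halve (Pi.single i 2 + Pi.single j 2)) := by
  rw [isRoot_halve]
  revert i j
  decide

theorem isRoot_halve_single_sub_single {i j : Fin 8} (hij : i ≠ j) :
    isRoot (halve (Pi.single i 2 - Pi.single j 2)) := by
  rw [isRoot_halve]
  revert i j
  decide

theorem dot_halve_single_two (a : Fin 8 → ℝ) (i : Fin 8) :
    dot a (halve (Pi.single i 2)) = a i := by
  have : halve (Pi.single i 2) = Pi.single i 1 := by
    ext j
    rcases eq_or_ne j i with rfl | h <;> simp [halve_apply, *]
  exact this ▸ dotProduct_single_one a i

/-- Self-duality of `Λ`, tested on roots only; this is why the Weyl group preserves `Λ`. -/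
theorem inLambda_iff_forall_isRoot {a : Fin 8 → ℝ} :
    inLambda a ↔ ∀ r, isRoot r → ∃ n : ℤ, dot a r = n := by
  refine ⟨fun ha r hr => exists_int_dot_eq ha hr.1, fun h => ?_⟩
  have add_int {i j : Fin 8} (hij : i ≠ j) : ∃ n : ℤ, a i + a j = n := by
    simpa only [map_add, dot_add, dot_halve_single_two] using
      h _ (isRoot_halve_single_add_single hij)
  have sub_int {i j : Fin 8} (hij : i ≠ j) : ∃ n : ℤ, a i - a j = n := by
    simpa only [map_sub, dot_sub, dot_halve_single_two] using
      h _ (isRoot_halve_single_sub_single hij)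
  obtain ⟨v, rfl⟩ : ∃ v, halve v = a := by
    have two_mul_int (i : Fin 8) : ∃ n : ℤ, 2 * a i = n := by
      have hi : i ≠ i + 1 := by revert i; decide
      obtain ⟨m, hm⟩ := add_int hi
      obtain ⟨n, hn⟩ := sub_int hi
      exact ⟨m + n, by push_cast; linarith⟩
    choose v hv using two_mul_int
    exact ⟨v, funext fun i => by rw [halve_apply, ← hv]; ring⟩
  refine inLambda_halve.mpr ⟨fun i => ?_, ?_⟩
  · rcases eq_or_ne i 0 with rfl | hi
    · simp
    · obtain ⟨n, hn⟩ := sub_int hi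
      rw [halve_apply, halve_apply, ← sub_div, ← Int.cast_sub, div_two_eq_intCast_iff] at hn
      exact ⟨n, hn⟩
  · obtain ⟨n, hn⟩ := h (halve 1) (isRoot_halve.mpr (by decide))
    rw [dot_halve, dotProduct_one, div_eq_iff four_ne_zero] at hn
    exact ⟨n, by rw [mul_comm]; exact_mod_cast hn⟩

/-- The lattice `Λ` as a subgroup of `ℝ^8`. -/
def e8Lattice : AddSubgroup (Fin 8 → ℝ) where
  carrier := {a | inLambda a}
  zero_mem' := inLambda_iff_forall_isRoot.mpr fun r _ => ⟨0, by simp [dot]⟩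
  add_mem' {a b} ha hb := inLambda_iff_forall_isRoot.mpr fun r hr => by
    obtain ⟨m, hm⟩ := exists_int_dot_eq hr.1 ha
    obtain ⟨n, hn⟩ := exists_int_dot_eq hr.1 hb
    exact ⟨m + n, by rw [dot_comm, dot_add, hm, hn, Int.cast_add]⟩
  neg_mem' {a} ha := inLambda_iff_forall_isRoot.mpr fun r hr => by
    obtain ⟨n, hn⟩ := exists_int_dot_eq hr.1 ha
    exact ⟨-n, by rw [dot_comm, dot_neg, hn, Int.cast_neg]⟩

theorem isRoot_sub_of_dot_eq_one {x y : Fin 8 → ℝ} (hx : isRoot x) (hy : isRoot y)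
    (hxy : dot x y = 1) : isRoot (x - y) := by
  refine ⟨e8Lattice.sub_mem hx.1 hy.1, ?_⟩
  rw [dot_sub, dot_comm _ x, dot_comm _ y, dot_sub, dot_sub, dot_comm y x, hx.2, hy.2, hxy]
  norm_num

/-! ### The Weyl group -/

/-- The Weyl group `W`, as a group of linear automorphisms of `ℝ^8`. -/
def weylGroup : Subgroup ((Fin 8 → ℝ) ≃ₗ[ℝ] (Fin 8 → ℝ)) where
  carrier := {w | IsWeyl w}
  one_mem' := ⟨fun _ _ => rfl, Set.image_id _⟩
  mul_mem' {v w} hv hw := by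
    refine ⟨fun a b => (hv.1 _ _).trans (hw.1 a b), ?_⟩
    change v ∘ w '' _ = _
    rw [Set.image_comp, hw.2, hv.2]
  inv_mem' {w} hw := by
    refine ⟨fun a b => ?_, ?_⟩
    · rw [← hw.1]
      exact congrArg₂ dot (w.apply_symm_apply a) (w.apply_symm_apply b)
    · nth_rw 1 [← hw.2]
      exact w.toEquiv.symm_image_image _

theorem dot_weylGroup_smul (w : weylGroup) (a b : Fin 8 → ℝ) : dot (w • a) (w • b) = dot a b :=
  w.2.1 a b

theorem isRoot_weylGroup_smul_iff (w : weylGroup) {a : Fin 8 → ℝ} :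
    isRoot (w • a) ↔ isRoot a := by
  have preserves (v : weylGroup) {b : Fin 8 → ℝ} (hb : isRoot b) : isRoot (v • b) :=
    v.2.2.subset (Set.mem_image_of_mem _ hb)
  exact ⟨fun h => inv_smul_smul w a ▸ preserves w⁻¹ h, preserves w⟩

theorem inLambda_weylGroup_smul_iff (w : weylGroup) {a : Fin 8 → ℝ} :
    inLambda (w • a) ↔ inLambda a := by
  have preserves (v : weylGroup) {b : Fin 8 → ℝ} (hb : inLambda b) : inLambda (v • b) :=
    inLambda_iff_forall_isRoot.mpr fun r hr => by
      rw [← smul_inv_smul v r, dot_weylGroup_smul]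
      exact exists_int_dot_eq hb ((isRoot_weylGroup_smul_iff v⁻¹).mpr hr).1
  exact ⟨fun h => inv_smul_smul w a ▸ preserves w⁻¹ h, preserves w⟩

theorem dot_sub_dot_smul_sub_dot_smul {r : Fin 8 → ℝ} (hr : dot r r = 2) (a b : Fin 8 → ℝ) :
    dot (a - dot r a • r) (b - dot r b • r) = dot a b := by
  rw [dot_sub, dot_comm _ b, dot_smul, dot_comm _ r, dot_sub, dot_sub, dot_smul, dot_smul,
    dot_comm b r, dot_comm b a, hr]
  ring

theorem isRoot_sub_dot_smul {r x : Fin 8 → ℝ} (hr : isRoot r) (hx : isRoot x) :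
    isRoot (x - dot r x • r) := by
  obtain ⟨n, hn⟩ := exists_int_dot_eq hr.1 hx.1
  refine ⟨e8Lattice.sub_mem hx.1 ?_, (dot_sub_dot_smul_sub_dot_smul hr.2 x x).trans hx.2⟩
  rw [hn, Int.cast_smul_eq_zsmul]
  exact e8Lattice.zsmul_mem hr.1 n

/-- The reflection in the hyperplane orthogonal to a root. -/
def rootReflection {r : Fin 8 → ℝ} (hr : isRoot r) : weylGroup :=
  ⟨Module.reflection (x := r) (f := dotProductEquiv ℝ (Fin 8) r) hr.2,
    dot_sub_dot_smul_sub_dot_smul hr.2,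
    (Module.bijOn_reflection_of_mapsTo (f := dotProductEquiv ℝ (Fin 8) r) (Φ := {a | isRoot a}) hr.2
      fun _ hx => isRoot_sub_dot_smul hr hx).image_eq⟩

theorem rootReflection_smul {r : Fin 8 → ℝ} (hr : isRoot r) (x : Fin 8 → ℝ) :
    rootReflection hr • x = x - dot r x • r := rfl

/-! ### Enumeration of the roots and neighbors of the standard cliques -/

/-- The vectors of length `n` with entries in `A` and squared norm `m`, by recursion on the first
entry. -/
def vectorsOfNorm (A : Finset ℤ) : (n : ℕ) → ℤ → Finset (Fin n → ℤ)
  | 0, m => if m = 0 then {![]} else ∅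
  | n + 1, m => ({a ∈ A | a * a ≤ m}.sigma fun a => vectorsOfNorm A n (m - a * a)).map
      ((Equiv.sigmaEquivProd ℤ _).trans (Fin.consEquiv fun _ => ℤ)).toEmbedding

theorem mem_vectorsOfNorm {A : Finset ℤ} {n : ℕ} {m : ℤ} {v : Fin n → ℤ} :
    v ∈ vectorsOfNorm A n m ↔ (∀ i, v i ∈ A) ∧ v ⬝ᵥ v = m := by
  induction n generalizing m with
  | zero =>
    rw [vectorsOfNorm, Subsingleton.elim v ![]]
    split_ifs with hm <;> simp [hm, eq_comm]
  | succ n ih =>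
    cases v using Fin.consCases with | _ a v
    have hv : 0 ≤ v ⬝ᵥ v := sum_nonneg fun i _ => mul_self_nonneg (v i)
    have mem_succ : (Fin.cons a v : Fin (n + 1) → ℤ) ∈ vectorsOfNorm A (n + 1) m ↔
        (a ∈ A ∧ a * a ≤ m) ∧ v ∈ vectorsOfNorm A n (m - a * a) := by
      rw [vectorsOfNorm, mem_map_equiv]
      simp [mem_sigma, Equiv.sigmaEquivProd]
    have dot_cons : (Fin.cons a v : Fin (n + 1) → ℤ) ⬝ᵥ Fin.cons a v = a * a + v ⬝ᵥ v := by
      simp only [dotProduct, Fin.sum_univ_succ, Fin.cons_zero, Fin.cons_succ]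
    rw [mem_succ, ih, dot_cons, Fin.forall_fin_succ]
    simp only [Fin.cons_zero, Fin.cons_succ]
    constructor
    · rintro ⟨⟨ha, -⟩, hA, h⟩
      exact ⟨⟨ha, hA⟩, by omega⟩
    · rintro ⟨⟨ha, hA⟩, h⟩
      exact ⟨⟨ha, by omega⟩, hA, by omega⟩

theorem disjoint_vectorsOfNorm {A B : Finset ℤ} (h : Disjoint A B) (n : ℕ) (l m : ℤ) :
    Disjoint (vectorsOfNorm A (n + 1) l) (vectorsOfNorm B (n + 1) m) :=
  disjoint_left.mpr fun _ hA hB =>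
    disjoint_left.mp h ((mem_vectorsOfNorm.mp hA).1 0) ((mem_vectorsOfNorm.mp hB).1 0)

/-- The doubled coordinate vectors of the roots: the two parts correspond to the integral and the
half-integral roots. -/
def doubledRoots : Finset (Fin 8 → ℤ) :=
  {v ∈ (vectorsOfNorm {-2, 0, 2} 8 8).disjUnion (vectorsOfNorm {-1, 1} 8 8)
    (disjoint_vectorsOfNorm (by decide) 7 8 8) | 4 ∣ ∑ i, v i}

theorem mem_doubledRoots {v : Fin 8 → ℤ} : v ∈ doubledRoots ↔ isRoot (halve v) := by
  have abs_le (h : v ⬝ᵥ v = 8) (i : Fin 8) : -2 ≤ v i ∧ v i ≤ 2 := by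
    have : v i * v i ≤ 8 := h ▸ single_le_sum (f := fun j => v j * v j)
      (fun j _ => mul_self_nonneg (v j)) (mem_univ i)
    constructor <;> nlinarith
  simp only [isRoot_halve, doubledRoots, mem_filter, mem_disjUnion, mem_vectorsOfNorm, mem_insert,
    mem_singleton]
  constructor
  · rintro ⟨⟨h, hv⟩ | ⟨h, hv⟩, hs⟩ <;>
      exact ⟨⟨fun i => by have := h i; have := h 0; omega, hs⟩, hv⟩
  · rintro ⟨⟨h, hs⟩, hv⟩
    have bound := abs_le hv
    refine ⟨?_, hs⟩
    rcases Int.even_or_odd (v 0) with h0 | h0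
    · exact .inl ⟨fun i => by have := bound i; have := h i; have := Int.even_iff.mp h0; omega, hv⟩
    · exact .inr ⟨fun i => by have := bound i; have := h i; have := Int.odd_iff.mp h0; omega, hv⟩

/-- The `k`-th root `e₀ + e_{k+1}` of the standard clique, in doubled coordinates. -/
def starVertex (k : ℕ) : Fin 8 → ℤ := fun i => if i.val = 0 ∨ i.val = k + 1 then 2 else 0

/-- The standard clique of size `k ≤ 7`, consisting of the roots `e₀ + e₁, …, e₀ + e_k` in doubled
coordinates. -/
def starClique (k : ℕ) : Finset (Fin 8 → ℤ) := (range k).image starVertex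

/-- The roots having dot product `1` with every member of `S`, all in doubled coordinates. -/
def doubledNeighbors (S : Finset (Fin 8 → ℤ)) : Finset (Fin 8 → ℤ) :=
  {v ∈ doubledRoots | ∀ u ∈ S, v ⬝ᵥ u = 4}

theorem mem_doubledNeighbors {S : Finset (Fin 8 → ℤ)} {v : Fin 8 → ℤ} :
    v ∈ doubledNeighbors S ↔ isRoot (halve v) ∧ ∀ u ∈ S, v ⬝ᵥ u = 4 := by
  rw [doubledNeighbors, mem_filter, mem_doubledRoots]

theorem doubledNeighbors_insert (S : Finset (Fin 8 → ℤ)) (u : Fin 8 → ℤ) :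
    doubledNeighbors (insert u S) = {v ∈ doubledNeighbors S | v ⬝ᵥ u = 4} := by
  ext v
  rw [mem_filter, mem_doubledNeighbors, mem_doubledNeighbors, forall_mem_insert, and_assoc,
    and_comm (a := v ⬝ᵥ u = 4)]

theorem card_doubledNeighbors_starClique (k : Fin 7) :
    #(doubledNeighbors (starClique k)) = ![240, 56, 27, 16, 10, 6, 3] k := by
  decide +revert +kernel

theorem starVertex_mem_doubledNeighbors (k : Fin 7) :
    starVertex k ∈ doubledNeighbors (starClique k) := by
  rw [mem_doubledNeighbors, isRoot_halve]
  decide +revert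

theorem exists_walk_doubledNeighbors (k : Fin 6) :
    ∀ x ∈ doubledNeighbors (starClique k), ∃ y ∈ doubledNeighbors (starClique k), x ⬝ᵥ y = 4 ∧
      ∃ z ∈ doubledNeighbors (starClique (k + 1)), y ⬝ᵥ z = 4 := by
  decide +revert +kernel

theorem starClique_succ (k : ℕ) : starClique (k + 1) = insert (starVertex k) (starClique k) := by
  rw [starClique, range_add_one, image_insert, starClique]

/-- The common neighbor `e₀ - e₇` of the standard 6-clique, in doubled coordinates. It is the one
that is not adjacent to any other. -/
def isolatedVertex : Fin 8 → ℤ := ![2, 0, 0, 0, 0, 0, 0, -2]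

theorem doubledNeighbors_starClique_six :
    doubledNeighbors (starClique 6) = {isolatedVertex, starVertex 6, 1} := by
  refine (eq_of_subset_of_card_le ?_ (card_doubledNeighbors_starClique 6).le).symm
  simp only [subset_iff, mem_doubledNeighbors, isRoot_halve]
  decide

/-- The standard maximal clique of size `7`, in doubled coordinates. -/
def isolatedClique : Finset (Fin 8 → ℤ) := insert isolatedVertex (starClique 6)

theorem doubledNeighbors_isolatedClique : doubledNeighbors isolatedClique = ∅ := by
  rw [isolatedClique, doubledNeighbors_insert, doubledNeighbors_starClique_six]
  decide

theorem doubledNeighbors_starClique_seven : doubledNeighbors (starClique 7) = {1} := by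
  rw [starClique_succ, doubledNeighbors_insert, doubledNeighbors_starClique_six]
  decide

theorem card_doubledNeighbors_insert_starClique_six :
    ∀ v ∈ doubledNeighbors (starClique 6),
      #(doubledNeighbors (insert v (starClique 6))) = if v = isolatedVertex then 0 else 1 := by
  simp only [doubledNeighbors_insert, doubledNeighbors_starClique_six]
  decide

/-! ### Common neighbors and orbits of cliques -/

theorem finite_setOf_isRoot : {x | isRoot x}.Finite :=
  (doubledRoots.finite_toSet.image halve).subset fun x hx => by
    obtain ⟨v, rfl⟩ := exists_halve_eq_of_inLambda hx.1
    exact ⟨v, mem_doubledRoots.mpr hx, rfl⟩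

/-- The root system `E` as a finite set. -/
def e8Roots : Finset (Fin 8 → ℝ) := finite_setOf_isRoot.toFinset

theorem mem_e8Roots {x : Fin 8 → ℝ} : x ∈ e8Roots ↔ isRoot x :=
  finite_setOf_isRoot.mem_toFinset

/-- The common neighbors of `K` in the graph `Γ_1`. -/
def commonNeighbors (K : Finset (Fin 8 → ℝ)) : Finset (Fin 8 → ℝ) :=
  {x ∈ e8Roots | ∀ y ∈ K, dot x y = 1}

theorem mem_commonNeighbors {K : Finset (Fin 8 → ℝ)} {x : Fin 8 → ℝ} :
    x ∈ commonNeighbors K ↔ isRoot x ∧ ∀ y ∈ K, dot x y = 1 := by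
  rw [commonNeighbors, mem_filter, mem_e8Roots]

theorem dot_halve_eq_one_iff {u v : Fin 8 → ℤ} : dot (halve u) (halve v) = 1 ↔ u ⬝ᵥ v = 4 := by
  rw [dot_halve, div_eq_one_iff_eq four_ne_zero]
  norm_cast

theorem halve_mem_commonNeighbors_image_halve {S : Finset (Fin 8 → ℤ)} {v : Fin 8 → ℤ} :
    halve v ∈ commonNeighbors (S.image halve) ↔ v ∈ doubledNeighbors S := by
  simp only [mem_commonNeighbors, mem_doubledNeighbors, forall_mem_image, dot_halve_eq_one_iff]

theorem commonNeighbors_image_halve (S : Finset (Fin 8 → ℤ)) :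
    commonNeighbors (S.image halve) = (doubledNeighbors S).image halve := by
  ext x
  refine ⟨fun hx => ?_, fun hx => ?_⟩
  · obtain ⟨v, rfl⟩ := exists_halve_eq_of_inLambda (mem_commonNeighbors.mp hx).1.1
    exact mem_image_of_mem halve (halve_mem_commonNeighbors_image_halve.mp hx)
  · obtain ⟨v, hv, rfl⟩ := mem_image.mp hx
    exact halve_mem_commonNeighbors_image_halve.mpr hv

theorem card_commonNeighbors_image_halve (S : Finset (Fin 8 → ℤ)) :
    #(commonNeighbors (S.image halve)) = #(doubledNeighbors S) := by
  rw [commonNeighbors_image_halve, card_image_of_injective _ halve_injective]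

theorem commonNeighbors_smul (w : weylGroup) (K : Finset (Fin 8 → ℝ)) :
    commonNeighbors (w • K) = w • commonNeighbors K := by
  ext x
  rw [← smul_inv_smul w x, smul_mem_smul_finset_iff, mem_commonNeighbors, mem_commonNeighbors,
    isRoot_weylGroup_smul_iff, smul_finset_def, forall_mem_image]
  simp only [dot_weylGroup_smul]

theorem IsClique.mono {c : Set ℝ} {K L : Finset (Fin 8 → ℝ)} (hL : IsClique c L) (h : K ⊆ L) :
    IsClique c K :=
  ⟨fun e he => hL.1 e (h he), fun e he f hf => hL.2 e (h he) f (h hf)⟩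

theorem notMem_of_mem_commonNeighbors {K : Finset (Fin 8 → ℝ)} {x : Fin 8 → ℝ}
    (hx : x ∈ commonNeighbors K) : x ∉ K := fun hxK => by
  rw [mem_commonNeighbors] at hx
  linarith [hx.1.2, hx.2 x hxK]

theorem IsClique.mem_commonNeighbors_of_notMem {K L : Finset (Fin 8 → ℝ)} (hL : IsClique {1} L)
    (hKL : K ⊆ L) {x : Fin 8 → ℝ} (hxL : x ∈ L) (hxK : x ∉ K) : x ∈ commonNeighbors K :=
  mem_commonNeighbors.mpr
    ⟨hL.1 x hxL, fun y hy => hL.2 x hxL y (hKL hy) (ne_of_mem_of_not_mem hy hxK).symm⟩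

theorem isClique_and_mem_commonNeighbors_iff {K : Finset (Fin 8 → ℝ)} {x : Fin 8 → ℝ} :
    IsClique {1} K ∧ x ∈ commonNeighbors K ↔ x ∉ K ∧ IsClique {1} (insert x K) := by
  constructor
  · rintro ⟨hK, hx⟩
    refine ⟨notMem_of_mem_commonNeighbors hx, ?_⟩
    rw [mem_commonNeighbors] at hx
    refine ⟨forall_mem_insert _ _ _ |>.mpr ⟨hx.1, hK.1⟩, ?_⟩
    simp only [forall_mem_insert, ne_eq, not_true_eq_false, false_implies, true_and,
      Set.mem_singleton_iff]
    exact ⟨fun y hy _ => hx.2 y hy, fun y hy => ⟨fun _ => dot_comm y x ▸ hx.2 y hy, hK.2 y hy⟩⟩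
  · rintro ⟨hx, hK⟩
    exact ⟨hK.mono (subset_insert x K),
      hK.mem_commonNeighbors_of_notMem (subset_insert x K) (mem_insert_self x K) hx⟩

theorem isMaxClique_iff {K : Finset (Fin 8 → ℝ)} :
    IsMaxClique {1} K ↔ IsClique {1} K ∧ commonNeighbors K = ∅ := by
  refine and_congr_right fun hK => ⟨fun hmax => ?_, fun hN L hL hKL => ?_⟩
  · refine eq_empty_of_forall_notMem fun x hx => ?_
    obtain ⟨hxK, hins⟩ := isClique_and_mem_commonNeighbors_iff.mp ⟨hK, hx⟩
    exact hxK (insert_eq_self.mp (hmax _ hins (subset_insert x K)))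
  · refine hKL.antisymm' fun x hxL => by_contra fun hxK => notMem_empty x ?_
    exact hN ▸ hL.mem_commonNeighbors_of_notMem hKL hxL hxK

theorem orbit_insert_eq_of_orbit_fixingSubgroup_eq {G α : Type*} [Group G] [MulAction G α]
    [DecidableEq α] {K : Finset α} {x y : α}
    (h : orbit (fixingSubgroup G (K : Set α)) x = orbit (fixingSubgroup G (K : Set α)) y) :
    orbit G (insert x K) = orbit G (insert y K) := by
  obtain ⟨⟨g, hg⟩, rfl⟩ := orbit_eq_iff.mp h
  have fixes : g • K = K :=
    (image_congr fun z hz => (mem_fixingSubgroup_iff G).mp hg z hz).trans image_id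
  refine orbit_eq_iff.mpr ⟨g, ?_⟩
  change g • insert y K = insert (g • y) K
  rw [smul_finset_insert, fixes]

/-- The reflection in `x - y` swaps `x` and `y` and fixes `K` pointwise. -/
theorem orbit_fixingSubgroup_eq_of_dot_eq_one {K : Finset (Fin 8 → ℝ)} {x y : Fin 8 → ℝ}
    (hx : x ∈ commonNeighbors K) (hy : y ∈ commonNeighbors K) (hxy : dot x y = 1) :
    orbit (fixingSubgroup weylGroup (K : Set (Fin 8 → ℝ))) x =
      orbit (fixingSubgroup weylGroup (K : Set (Fin 8 → ℝ))) y := by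
  rw [mem_commonNeighbors] at hx hy
  have hr := isRoot_sub_of_dot_eq_one hx.1 hy.1 hxy
  refine orbit_eq_iff.mpr ⟨⟨rootReflection hr, (mem_fixingSubgroup_iff _).mpr fun z hz => ?_⟩, ?_⟩
  · rw [rootReflection_smul, dot_comm, dot_sub, dot_comm z, dot_comm z, hx.2 z hz, hy.2 z hz,
      sub_self, zero_smul, sub_zero]
  · change rootReflection hr • y = x
    rw [rootReflection_smul, dot_comm, dot_sub, dot_comm y x, hxy, hy.1.2]
    module

theorem IsClique.exists_orbit_eq_orbit_insert {K B : Finset (Fin 8 → ℝ)} (hK : IsClique {1} K)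
    {e : Fin 8 → ℝ} (he : e ∈ K) (h : orbit weylGroup (K.erase e) = orbit weylGroup B) :
    ∃ x ∈ commonNeighbors B, orbit weylGroup K = orbit weylGroup (insert x B) := by
  obtain ⟨w, hw⟩ := orbit_eq_iff.mp h.symm
  obtain rfl : w • K.erase e = B := hw
  refine ⟨w • e, ?_, ?_⟩
  · rw [commonNeighbors_smul, smul_mem_smul_finset_iff]
    exact hK.mem_commonNeighbors_of_notMem (erase_subset e K) he (notMem_erase e K)
  · rw [← smul_finset_insert, insert_erase he, orbit_smul]

theorem orbit_fixingSubgroup_eq_starVertex (k : Fin 6) {x : Fin 8 → ℝ}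
    (hx : x ∈ commonNeighbors ((starClique k).image halve)) :
    orbit (fixingSubgroup weylGroup ((starClique k).image halve : Set (Fin 8 → ℝ))) x =
      orbit (fixingSubgroup weylGroup ((starClique k).image halve : Set (Fin 8 → ℝ)))
        (halve (starVertex k)) := by
  have step {u v : Fin 8 → ℤ} (hu : u ∈ doubledNeighbors (starClique k))
      (hv : v ∈ doubledNeighbors (starClique k)) (huv : u ⬝ᵥ v = 4) :=
    orbit_fixingSubgroup_eq_of_dot_eq_one (K := (starClique k).image halve)
      (halve_mem_commonNeighbors_image_halve.mpr hu)
      (halve_mem_commonNeighbors_image_halve.mpr hv) (dot_halve_eq_one_iff.mpr huv)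
  rw [commonNeighbors_image_halve] at hx
  obtain ⟨u, hu, rfl⟩ := mem_image.mp hx
  obtain ⟨v, hv, huv, z, hz, hvz⟩ := exists_walk_doubledNeighbors k u hu
  rw [starClique_succ, doubledNeighbors_insert, mem_filter] at hz
  exact ((step hu hv huv).trans (step hv hz.1 hvz)).trans
    (step hz.1 (starVertex_mem_doubledNeighbors k.castSucc) hz.2)

theorem IsClique.orbit_eq_starClique {K : Finset (Fin 8 → ℝ)} (hK : IsClique {1} K) {k : ℕ}
    (hk : k ≤ 6) (hcard : #K = k) :
    orbit weylGroup K = orbit weylGroup ((starClique k).image halve) := by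
  induction k generalizing K with
  | zero => rw [card_eq_zero.mp hcard, starClique, range_zero, image_empty, image_empty]
  | succ k ih =>
    obtain ⟨e, he⟩ := card_pos.mp (by omega : 0 < #K)
    have herase := ih (hK.mono (erase_subset e K)) (by omega)
      (by rw [card_erase_of_mem he, hcard, Nat.add_sub_cancel])
    obtain ⟨x, hx, hKx⟩ := hK.exists_orbit_eq_orbit_insert he herase
    rw [hKx, starClique_succ, image_insert]
    exact orbit_insert_eq_of_orbit_fixingSubgroup_eq
      (orbit_fixingSubgroup_eq_starVertex ⟨k, hk⟩ hx)

theorem orbit_insert_one_starClique_six :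
    orbit weylGroup ((insert 1 (starClique 6)).image halve) =
      orbit weylGroup ((starClique 7).image halve) := by
  rw [starClique_succ 6, image_insert, image_insert]
  refine orbit_insert_eq_of_orbit_fixingSubgroup_eq (orbit_fixingSubgroup_eq_of_dot_eq_one ?_ ?_
    (dot_halve_eq_one_iff.mpr (by decide)))
  all_goals
    rw [halve_mem_commonNeighbors_image_halve, doubledNeighbors_starClique_six]
    decide

theorem IsClique.orbit_eq_of_card_eq_seven {K : Finset (Fin 8 → ℝ)} (hK : IsClique {1} K)
    (hcard : #K = 7) :
    orbit weylGroup K = orbit weylGroup (isolatedClique.image halve) ∨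
      orbit weylGroup K = orbit weylGroup ((starClique 7).image halve) := by
  obtain ⟨e, he⟩ := card_pos.mp (by omega : 0 < #K)
  have herase := (hK.mono (erase_subset e K)).orbit_eq_starClique le_rfl
    (by rw [card_erase_of_mem he, hcard])
  obtain ⟨x, hx, hKx⟩ := hK.exists_orbit_eq_orbit_insert he herase
  rw [commonNeighbors_image_halve, doubledNeighbors_starClique_six] at hx
  obtain ⟨v, hv, rfl⟩ := mem_image.mp hx
  rw [← image_insert] at hKx
  simp only [mem_insert, mem_singleton] at hv
  rcases hv with rfl | rfl | rfl
  · exact .inl hKx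
  · exact .inr (starClique_succ 6 ▸ hKx)
  · exact .inr (hKx.trans orbit_insert_one_starClique_six)

/-! ### Counting cliques -/

theorem sum_sum_insert_eq_nsmul_sum {α M : Type*} [DecidableEq α] [AddCommMonoid M]
    {𝒜 ℬ : Finset (Finset α)} {N : Finset α → Finset α} {n : ℕ} (hℬ : ∀ L ∈ ℬ, #L = n)
    (hN : ∀ K x, K ∈ 𝒜 ∧ x ∈ N K ↔ x ∉ K ∧ insert x K ∈ ℬ) (f : Finset α → M) :
    ∑ K ∈ 𝒜, ∑ x ∈ N K, f (insert x K) = n • ∑ L ∈ ℬ, f L := by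
  calc ∑ K ∈ 𝒜, ∑ x ∈ N K, f (insert x K)
      = ∑ L ∈ ℬ, ∑ _x ∈ L, f L := by
        rw [sum_sigma', sum_sigma']
        refine sum_bij' (fun p _ => ⟨insert p.2 p.1, p.2⟩) (fun p _ => ⟨p.1.erase p.2, p.2⟩)
          ?_ ?_ ?_ ?_ fun _ _ => rfl
        · rintro ⟨K, x⟩ h
          exact mem_sigma.mpr ⟨((hN K x).mp (mem_sigma.mp h)).2, mem_insert_self x K⟩
        · rintro ⟨L, x⟩ h
          rw [mem_sigma] at h ⊢
          exact (hN _ x).mpr ⟨notMem_erase x L, (insert_erase h.2).symm ▸ h.1⟩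
        · rintro ⟨K, x⟩ h
          simp only [erase_insert ((hN K x).mp (mem_sigma.mp h)).1]
        · rintro ⟨L, x⟩ h
          simp only [insert_erase (mem_sigma.mp h).2]
    _ = n • ∑ L ∈ ℬ, f L := by
        rw [smul_sum]
        exact sum_congr rfl fun L hL => by rw [sum_const, hℬ L hL]

open scoped Classical in
/-- The cliques of size `n` in `Γ_1`. -/
def cliquesOfCard (n : ℕ) : Finset (Finset (Fin 8 → ℝ)) :=
  {K ∈ e8Roots.powersetCard n | IsClique {1} K}

theorem mem_cliquesOfCard {n : ℕ} {K : Finset (Fin 8 → ℝ)} :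
    K ∈ cliquesOfCard n ↔ IsClique {1} K ∧ #K = n := by
  simp only [cliquesOfCard, mem_filter, mem_powersetCard]
  rw [and_comm, and_congr_right_iff]
  exact fun hK => and_iff_right fun e he => mem_e8Roots.mpr (hK.1 e he)

theorem sum_sum_insert_cliquesOfCard (n : ℕ) (f : Finset (Fin 8 → ℝ) → ℕ) :
    ∑ K ∈ cliquesOfCard n, ∑ x ∈ commonNeighbors K, f (insert x K) =
      (n + 1) * ∑ L ∈ cliquesOfCard (n + 1), f L := by
  refine sum_sum_insert_eq_nsmul_sum (fun L hL => (mem_cliquesOfCard.mp hL).2) (fun K x => ?_) f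
  rw [mem_cliquesOfCard, mem_cliquesOfCard, and_right_comm, isClique_and_mem_commonNeighbors_iff,
    and_assoc]
  refine and_congr_right fun hx => and_congr_right fun _ => ?_
  rw [card_insert_of_notMem hx, Nat.add_right_cancel_iff]

theorem sum_card_commonNeighbors (n : ℕ) :
    ∑ K ∈ cliquesOfCard n, #(commonNeighbors K) = (n + 1) * #(cliquesOfCard (n + 1)) := by
  simpa only [← card_eq_sum_ones] using sum_sum_insert_cliquesOfCard n fun _ => 1

theorem IsClique.card_commonNeighbors {K : Finset (Fin 8 → ℝ)} (hK : IsClique {1} K) (k : Fin 7)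
    (hcard : #K = k) : #(commonNeighbors K) = ![240, 56, 27, 16, 10, 6, 3] k := by
  obtain ⟨w, hw⟩ := orbit_eq_iff.mp (hK.orbit_eq_starClique (Nat.le_of_lt_succ k.2) hcard)
  obtain rfl : w • (starClique k).image halve = K := hw
  rw [commonNeighbors_smul, card_smul_finset, card_commonNeighbors_image_halve,
    card_doubledNeighbors_starClique]

theorem card_cliquesOfCard_succ (k : Fin 7) :
    #(cliquesOfCard k) * ![240, 56, 27, 16, 10, 6, 3] k = (k + 1) * #(cliquesOfCard (k + 1)) := by
  rw [← sum_card_commonNeighbors, ← smul_eq_mul, ← sum_const]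
  refine sum_congr rfl fun K hK => ?_
  rw [mem_cliquesOfCard] at hK
  exact (hK.1.card_commonNeighbors k hK.2).symm

theorem card_cliquesOfCard_zero : #(cliquesOfCard 0) = 1 := by
  refine card_eq_one.mpr ⟨∅, ext fun K => ?_⟩
  rw [mem_cliquesOfCard, mem_singleton, card_eq_zero]
  refine and_iff_right_of_imp ?_
  rintro rfl
  simp [IsClique]

theorem card_cliquesOfCard_six_and_seven :
    #(cliquesOfCard 6) = 483840 ∧ #(cliquesOfCard 7) = 207360 := by
  have zero := card_cliquesOfCard_zero
  have step := card_cliquesOfCard_succ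
  generalize cliquesOfCard = C at zero step ⊢
  have h1 : #(C 0) * 240 = 1 * #(C 1) := step 0
  have h2 : #(C 1) * 56 = 2 * #(C 2) := step 1
  have h3 : #(C 2) * 27 = 3 * #(C 3) := step 2
  have h4 : #(C 3) * 16 = 4 * #(C 4) := step 3
  have h5 : #(C 4) * 10 = 5 * #(C 5) := step 4
  have h6 : #(C 5) * 6 = 6 * #(C 6) := step 5
  have h7 : #(C 6) * 3 = 7 * #(C 7) := step 6
  omega

theorem sum_card_commonNeighbors_insert_smul (w : weylGroup) (K : Finset (Fin 8 → ℝ)) :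
    ∑ x ∈ commonNeighbors (w • K), #(commonNeighbors (insert x (w • K))) =
      ∑ x ∈ commonNeighbors K, #(commonNeighbors (insert x K)) := by
  rw [commonNeighbors_smul, smul_finset_def, sum_image (MulAction.injective w).injOn]
  simp only [← smul_finset_insert, commonNeighbors_smul, card_smul_finset]

theorem sum_card_commonNeighbors_insert_starClique_six :
    ∑ x ∈ commonNeighbors ((starClique 6).image halve),
      #(commonNeighbors (insert x ((starClique 6).image halve))) = 2 := by
  rw [commonNeighbors_image_halve, sum_image halve_injective.injOn]
  simp only [← image_insert, card_commonNeighbors_image_halve]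
  rw [sum_congr rfl card_doubledNeighbors_insert_starClique_six, doubledNeighbors_starClique_six]
  decide

theorem card_cliquesOfCard_eight : #(cliquesOfCard 8) = 17280 := by
  have flags : ∑ K ∈ cliquesOfCard 6, 2 = 7 * (8 * #(cliquesOfCard 8)) := by
    rw [← sum_card_commonNeighbors, ← sum_sum_insert_cliquesOfCard]
    refine sum_congr rfl fun K hK => ?_
    rw [mem_cliquesOfCard] at hK
    obtain ⟨w, hw⟩ := orbit_eq_iff.mp (hK.1.orbit_eq_starClique le_rfl hK.2)
    obtain rfl : w • (starClique 6).image halve = K := hw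
    rw [sum_card_commonNeighbors_insert_smul, sum_card_commonNeighbors_insert_starClique_six]
  rw [sum_const, card_cliquesOfCard_six_and_seven.1, smul_eq_mul] at flags
  omega

/-! ### Cliques of size seven -/

theorem card_commonNeighbors_eq_of_orbit_eq {K L : Finset (Fin 8 → ℝ)}
    (h : orbit weylGroup K = orbit weylGroup L) : #(commonNeighbors K) = #(commonNeighbors L) := by
  obtain ⟨w, rfl⟩ := orbit_eq_iff.mp h
  change #(commonNeighbors (w • L)) = _
  rw [commonNeighbors_smul, card_smul_finset]

theorem IsClique.isMaxClique_iff_card_commonNeighbors_eq_zero {K : Finset (Fin 8 → ℝ)}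
    (hK : IsClique {1} K) : IsMaxClique {1} K ↔ #(commonNeighbors K) = 0 := by
  rw [isMaxClique_iff, and_iff_right hK, card_eq_zero]

theorem IsClique.isMaxClique_iff_orbit_eq {K : Finset (Fin 8 → ℝ)} (hK : IsClique {1} K)
    (hcard : #K = 7) :
    IsMaxClique {1} K ↔ orbit weylGroup K = orbit weylGroup (isolatedClique.image halve) := by
  rw [hK.isMaxClique_iff_card_commonNeighbors_eq_zero]
  constructor
  · intro hN
    refine (hK.orbit_eq_of_card_eq_seven hcard).resolve_right fun h => ?_
    rw [card_commonNeighbors_eq_of_orbit_eq h, card_commonNeighbors_image_halve,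
      doubledNeighbors_starClique_seven] at hN
    exact one_ne_zero hN
  · intro h
    rw [card_commonNeighbors_eq_of_orbit_eq h, card_commonNeighbors_image_halve,
      doubledNeighbors_isolatedClique, card_empty]

theorem IsClique.orbit_eq_of_not_isMaxClique {K : Finset (Fin 8 → ℝ)} (hK : IsClique {1} K)
    (hcard : #K = 7) (hmax : ¬IsMaxClique {1} K) :
    orbit weylGroup K = orbit weylGroup ((starClique 7).image halve) :=
  (hK.orbit_eq_of_card_eq_seven hcard).resolve_left fun h =>
    hmax ((hK.isMaxClique_iff_orbit_eq hcard).mpr h)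

open scoped Classical in
theorem IsClique.card_commonNeighbors_of_card_eq_seven {K : Finset (Fin 8 → ℝ)}
    (hK : IsClique {1} K) (hcard : #K = 7) :
    #(commonNeighbors K) = if IsMaxClique {1} K then 0 else 1 := by
  split_ifs with hmax
  · exact hK.isMaxClique_iff_card_commonNeighbors_eq_zero.mp hmax
  · rw [card_commonNeighbors_eq_of_orbit_eq (hK.orbit_eq_of_not_isMaxClique hcard hmax),
      card_commonNeighbors_image_halve, doubledNeighbors_starClique_seven, card_singleton]

theorem exists_isWeyl_image_eq_iff {K L : Finset (Fin 8 → ℝ)} :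
    (∃ w : (Fin 8 → ℝ) ≃ₗ[ℝ] (Fin 8 → ℝ), IsWeyl w ∧
      ⇑w '' (K : Set (Fin 8 → ℝ)) = (L : Set (Fin 8 → ℝ))) ↔
      orbit weylGroup K = orbit weylGroup L := by
  have image_eq_iff (w : weylGroup) :
      (w : (Fin 8 → ℝ) ≃ₗ[ℝ] (Fin 8 → ℝ)) '' (K : Set (Fin 8 → ℝ)) = L ↔ w • K = L := by
    rw [← coe_inj, coe_smul_finset]
    rfl
  rw [eq_comm (a := orbit weylGroup K), orbit_eq_iff]
  exact ⟨fun ⟨w, hw, h⟩ => ⟨⟨w, hw⟩, (image_eq_iff ⟨w, hw⟩).mp h⟩,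
    fun ⟨w, h⟩ => ⟨w, w.2, (image_eq_iff w).mpr h⟩⟩

theorem IsClique.orbit_eq_iff_of_card_eq_seven {K L : Finset (Fin 8 → ℝ)} (hK : IsClique {1} K)
    (hKcard : #K = 7) (hL : IsClique {1} L) (hLcard : #L = 7) :
    orbit weylGroup K = orbit weylGroup L ↔ (IsMaxClique {1} K ↔ IsMaxClique {1} L) := by
  constructor
  · intro h
    rw [hK.isMaxClique_iff_orbit_eq hKcard, hL.isMaxClique_iff_orbit_eq hLcard, h]
  · intro h
    by_cases hmax : IsMaxClique {1} K
    · exact ((hK.isMaxClique_iff_orbit_eq hKcard).mp hmax).trans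
        ((hL.isMaxClique_iff_orbit_eq hLcard).mp (h.mp hmax)).symm
    · exact (hK.orbit_eq_of_not_isMaxClique hKcard hmax).trans
        (hL.orbit_eq_of_not_isMaxClique hLcard (h.not.mp hmax)).symm

theorem IsMaxClique.card_eq_seven_or_eight {K : Finset (Fin 8 → ℝ)} (hK : IsMaxClique {1} K) :
    #K = 7 ∨ #K = 8 := by
  have lower : 7 ≤ #K := by
    by_contra! hlt
    have pos : ∀ k : Fin 7, 0 < ![240, 56, 27, 16, 10, 6, 3] k := by decide
    have := hK.1.card_commonNeighbors ⟨#K, hlt⟩ rfl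
    rw [(isMaxClique_iff.mp hK).2, card_empty] at this
    exact (pos _).ne this
  have upper : #K - 7 ≤ 1 := by
    obtain ⟨M, hMK, hM⟩ := exists_subset_card_eq lower
    have hMclique := hK.1.mono hMK
    calc #K - 7 = #(K \ M) := by rw [card_sdiff_of_subset hMK, hM]
      _ ≤ #(commonNeighbors M) := card_le_card fun x hx =>
        hK.1.mem_commonNeighbors_of_notMem hMK (mem_sdiff.mp hx).1 (mem_sdiff.mp hx).2
      _ ≤ 1 := by
        rw [hMclique.card_commonNeighbors_of_card_eq_seven hM]
        split_ifs <;> decide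
  omega

open scoped Classical in
theorem card_filter_not_isMaxClique_cliquesOfCard_seven :
    #{K ∈ cliquesOfCard 7 | ¬IsMaxClique {1} K} = 138240 := by
  calc #{K ∈ cliquesOfCard 7 | ¬IsMaxClique {1} K}
      = ∑ K ∈ cliquesOfCard 7, #(commonNeighbors K) := by
        rw [card_filter]
        refine sum_congr rfl fun K hK => ?_
        rw [mem_cliquesOfCard] at hK
        rw [hK.1.card_commonNeighbors_of_card_eq_seven hK.2, ite_not]
    _ = 138240 := by rw [sum_card_commonNeighbors, card_cliquesOfCard_eight]

open scoped Classical in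
theorem card_filter_isMaxClique_cliquesOfCard_seven :
    #{K ∈ cliquesOfCard 7 | IsMaxClique {1} K} = 69120 := by
  rw [← Nat.add_right_cancel_iff (n := #{K ∈ cliquesOfCard 7 | ¬IsMaxClique {1} K}),
    card_filter_add_card_filter_not, card_cliquesOfCard_six_and_seven.2,
    card_filter_not_isMaxClique_cliquesOfCard_seven]

theorem exists_inLambda_eq_two_smul_iff {a : Fin 8 → ℝ} :
    (∃ x, inLambda x ∧ a = (2 : ℝ) • x) ↔ inLambda ((2 : ℝ)⁻¹ • a) := by
  constructor
  · rintro ⟨x, hx, rfl⟩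
    rwa [inv_smul_smul₀ two_ne_zero]
  · exact fun h => ⟨_, h, (smul_inv_smul₀ two_ne_zero a).symm⟩

theorem inLambda_half_sum_iff_of_orbit_eq {K L : Finset (Fin 8 → ℝ)}
    (h : orbit weylGroup K = orbit weylGroup L) :
    inLambda ((2 : ℝ)⁻¹ • ∑ e ∈ K, e) ↔ inLambda ((2 : ℝ)⁻¹ • ∑ e ∈ L, e) := by
  obtain ⟨w, hw⟩ := orbit_eq_iff.mp h
  obtain rfl : w • L = K := hw
  rw [smul_finset_def, sum_image (MulAction.injective w).injOn, ← smul_sum, smul_comm,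
    inLambda_weylGroup_smul_iff]

theorem half_sum_image_halve_eq {S : Finset (Fin 8 → ℤ)} {v : Fin 8 → ℤ}
    (h : ∑ u ∈ S, u = 2 • v) : (2 : ℝ)⁻¹ • ∑ e ∈ S.image halve, e = halve v := by
  rw [sum_image halve_injective.injOn, ← map_sum, h, map_nsmul, ← Nat.cast_smul_eq_nsmul ℝ,
    Nat.cast_ofNat, inv_smul_smul₀ two_ne_zero]

theorem inLambda_half_sum_isolatedClique :
    inLambda ((2 : ℝ)⁻¹ • ∑ e ∈ isolatedClique.image halve, e) := by
  rw [half_sum_image_halve_eq (v := ![7, 1, 1, 1, 1, 1, 1, -1]) (by decide), inLambda_halve]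
  decide

theorem not_inLambda_half_sum_starClique_seven :
    ¬inLambda ((2 : ℝ)⁻¹ • ∑ e ∈ (starClique 7).image halve, e) := by
  rw [half_sum_image_halve_eq (v := ![7, 1, 1, 1, 1, 1, 1, 1]) (by decide), inLambda_halve]
  decide

theorem IsClique.isMaxClique_iff_inLambda_half_sum {K : Finset (Fin 8 → ℝ)}
    (hK : IsClique {1} K) (hcard : #K = 7) :
    IsMaxClique {1} K ↔ inLambda ((2 : ℝ)⁻¹ • ∑ e ∈ K, e) := by
  constructor
  · exact fun hmax => (inLambda_half_sum_iff_of_orbit_eq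
      ((hK.isMaxClique_iff_orbit_eq hcard).mp hmax)).mpr inLambda_half_sum_isolatedClique
  · contrapose
    exact fun hmax => (inLambda_half_sum_iff_of_orbit_eq
      (hK.orbit_eq_of_not_isMaxClique hcard hmax)).not.mpr not_inLambda_half_sum_starClique_seven

end

/-- (i) Every maximal clique in `Γ_1` has size 7 or 8; (ii) the
cliques of size 7 in `Γ_1` form exactly two `W`-orbits: the non-maximal ones
(138240 of them) and the maximal ones (69120 of them), and a size-7 clique in
`Γ_1` is maximal iff its elements sum to a vector in `2Λ`; (iii) there are exactly
17280 cliques of size 8 in `Γ_1`. -/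
theorem stmt_15 :
    (∀ K : Finset (Fin 8 → ℝ), IsMaxClique {1} K → K.card = 7 ∨ K.card = 8) ∧
    ({K : Finset (Fin 8 → ℝ) |
        IsClique {1} K ∧ K.card = 7 ∧ ¬IsMaxClique {1} K}.ncard = 138240) ∧
    ({K : Finset (Fin 8 → ℝ) | IsMaxClique {1} K ∧ K.card = 7}.ncard = 69120) ∧
    (∀ K1 K2 : Finset (Fin 8 → ℝ),
      IsClique {1} K1 → K1.card = 7 → IsClique {1} K2 → K2.card = 7 →
      ((∃ w : (Fin 8 → ℝ) ≃ₗ[ℝ] (Fin 8 → ℝ), IsWeyl w ∧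
          ⇑w '' (K1 : Set (Fin 8 → ℝ)) = (K2 : Set (Fin 8 → ℝ))) ↔
        (IsMaxClique {1} K1 ↔ IsMaxClique {1} K2))) ∧
    (∀ K : Finset (Fin 8 → ℝ), IsClique {1} K → K.card = 7 →
      (IsMaxClique {1} K ↔ ∃ x, inLambda x ∧ (∑ e ∈ K, e) = (2 : ℝ) • x)) ∧
    ({K : Finset (Fin 8 → ℝ) | IsClique {1} K ∧ K.card = 8}.ncard = 17280) := by
  classical
  refine ⟨fun _ => IsMaxClique.card_eq_seven_or_eight, ?_, ?_, fun K1 K2 h1 c1 h2 c2 => ?_,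
    fun K hK hcard => ?_, ?_⟩
  · rw [← card_filter_not_isMaxClique_cliquesOfCard_seven, ← Set.ncard_coe_finset]
    congr 1 with K
    simp only [Finset.coe_filter, mem_cliquesOfCard, and_assoc]
  · rw [← card_filter_isMaxClique_cliquesOfCard_seven, ← Set.ncard_coe_finset]
    congr 1 with K
    rw [Finset.mem_coe, Finset.mem_filter, mem_cliquesOfCard]
    exact ⟨fun h => ⟨⟨h.1.1, h.2⟩, h.1⟩, fun h => ⟨h.2, h.1.2⟩⟩
  · rw [exists_isWeyl_image_eq_iff, h1.orbit_eq_iff_of_card_eq_seven c1 h2 c2]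
  · rw [exists_inLambda_eq_two_smul_iff, hK.isMaxClique_iff_inLambda_half_sum hcard]
  · rw [← card_cliquesOfCard_eight, ← Set.ncard_coe_finset]
    congr 1 with K
    exact mem_cliquesOfCard.symm
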